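/- Let λ, μ ∈ ℝ, ν ∈ ℝ², κ, c_s, c_p > 0 and n ∈ ℕ. For x ≠ y in ℝ² define W^{n,1}(x,y) = (U_1(x,y)/|x−y|²)[ η̃_{1,n}(|x−y|) I + η̃_{2,n}(|x−y|) J(x−y) ] + η_{2,n}(|x−y|) U_2(x,y)/|x−y|². Let x : ℝ → ℝ² be twice continuously differentiable and let s ∈ ℝ with x'(s) ≠ 0. Then x(σ) ≠ x(s) for all σ ≠ s sufficiently close to s, and lim_{σ → s, σ ≠ s} W^{n,1}(x(s), x(σ)) = 0 (the zero 2×2 matrix). -/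

import Mathlib

open Real Filter MeasureTheory

noncomputable def acoef (γ : ℝ) : ℕ → ℕ → ℝ
  | n, m =>
    if m = 0 then 1
    else if n < m then 0
    else if m = n then -(γ / (n : ℝ)) * acoef γ (n - 1) (n - 1)
    else (1 / (2 * γ * (m : ℝ))) *
      (4 * (((m + 1) / 2 : ℕ) : ℝ) ^ 2 * acoef γ n (m + 1)
        - γ ^ 2 * ∑ k ∈ (Finset.Icc (m - 1) (n - 1)).attach,
            ((n - (k : ℕ) + 1 : ℕ) : ℝ) * acoef γ (k : ℕ) (m - 1))
  termination_by n m => (n, n - m)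
  decreasing_by
  · apply Prod.Lex.left; omega
  · apply Prod.Lex.right; omega
  · apply Prod.Lex.left
    have hk := k.2
    simp only [Finset.mem_Icc] at hk
    omega

/-- χ_{k,n} -/
noncomputable def chiC (n : ℕ) (k : ℤ) : ℝ :=
  if k = -2 then (n : ℝ) * ((n : ℝ) - 1)
  else if k = -1 then -4 * (n : ℝ) ^ 2
  else if k = 0 then 2 * (3 * (n : ℝ) ^ 2 + 3 * (n : ℝ) + 1)
  else if k = 1 then -4 * ((n : ℝ) + 1) ^ 2
  else if k = 2 then ((n : ℝ) + 1) * ((n : ℝ) + 2)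
  else 0

/-- the sum ∑_{k=-2}^{2} χ_{k,n} f(n+k), terms with n+k<0 omitted -/
noncomputable def sumChi (n : ℕ) (f : ℕ → ℝ) : ℝ :=
  ∑ k ∈ Finset.Icc (-2 : ℤ) 2,
    if 0 ≤ (n : ℤ) + k then chiC n k * f ((n : ℤ) + k).toNat else 0

noncomputable def besselI0 (z : ℝ) : ℝ := ∑' k : ℕ, (z / 2) ^ (2 * k) / (k.factorial : ℝ) ^ 2

noncomputable def besselI1 (z : ℝ) : ℝ :=
  ∑' k : ℕ, (z / 2) ^ (2 * k + 1) / ((k.factorial : ℝ) * ((k + 1).factorial : ℝ))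

noncomputable def psiH (k : ℕ) : ℝ := ∑ j ∈ Finset.range k, (1 : ℝ) / ((j : ℝ) + 1)

noncomputable def besselS0 (z : ℝ) : ℝ :=
  ∑' k : ℕ, psiH k * (z / 2) ^ (2 * k) / (k.factorial : ℝ) ^ 2

noncomputable def besselS1 (z : ℝ) : ℝ :=
  -(1 / 2) * ∑' k : ℕ, (psiH (k + 1) + psiH k) * (z / 2) ^ (2 * k + 1) /
    ((k.factorial : ℝ) * ((k + 1).factorial : ℝ))

noncomputable def vPol (γ : ℝ) (n : ℕ) (r : ℝ) : ℝ :=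
  ∑ m ∈ Finset.range (n / 2 + 1), acoef γ n (2 * m) * r ^ (2 * m)

noncomputable def wPol (γ : ℝ) (n : ℕ) (r : ℝ) : ℝ :=
  ∑ m ∈ Finset.range ((n - 1) / 2 + 1), acoef γ n (2 * m + 1) * r ^ (2 * m + 1)

noncomputable def vTil (γ : ℝ) (n : ℕ) (r : ℝ) : ℝ :=
  2 * ∑ m ∈ Finset.Icc 1 (n / 2), (m : ℝ) * acoef γ n (2 * m) * r ^ (2 * m)
    - γ * ∑ m ∈ Finset.range ((n - 1) / 2 + 1), acoef γ n (2 * m + 1) * r ^ (2 * m + 2)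

noncomputable def wTil (γ : ℝ) (n : ℕ) (r : ℝ) : ℝ :=
  2 * ∑ m ∈ Finset.Icc 1 ((n - 1) / 2), (m : ℝ) * acoef γ n (2 * m + 1) * r ^ (2 * m + 1)
    - γ * ∑ m ∈ Finset.range (n / 2 + 1), acoef γ n (2 * m) * r ^ (2 * m + 1)

noncomputable def phiF (γ : ℝ) (n : ℕ) (r : ℝ) : ℝ :=
  -besselI0 (γ * r) * vPol γ n r + besselI1 (γ * r) * wPol γ n r

noncomputable def phiHat (γ : ℝ) (n : ℕ) (r : ℝ) : ℝ :=
  (-(Real.eulerMascheroniConstant + Real.log (γ / 2)) * besselI0 (γ * r) + besselS0 (γ * r)) * vPol γ n r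
    + (1 / (γ * r) + (Real.eulerMascheroniConstant + Real.log (γ / 2)) * besselI1 (γ * r)
        + besselS1 (γ * r)) * wPol γ n r

noncomputable def phiTil (γ : ℝ) (n : ℕ) (r : ℝ) : ℝ :=
  -besselI0 (γ * r) * vTil γ n r + besselI1 (γ * r) * wTil γ n r

noncomputable def phiHatTil (γ : ℝ) (n : ℕ) (r : ℝ) : ℝ :=
  (-(Real.eulerMascheroniConstant + Real.log (γ / 2)) * besselI0 (γ * r) + besselS0 (γ * r)) * vTil γ n r
    + (1 / (γ * r) + (Real.eulerMascheroniConstant + Real.log (γ / 2)) * besselI1 (γ * r)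
        + besselS1 (γ * r)) * wTil γ n r

noncomputable def etaF (κ cs cp : ℝ) (ℓ n : ℕ) (r : ℝ) : ℝ :=
  (-(ℓ : ℝ)) ^ (ℓ - 1) / (κ ^ 2 * r ^ 2) *
      sumChi n (fun j => phiF (κ / cs) j r - phiF (κ / cp) j r)
    + (-1 : ℝ) ^ (ℓ - 1) / cp ^ 2 * phiF (κ / cp) n r
    + ((ℓ : ℝ) - 1) / cs ^ 2 * phiF (κ / cs) n r

noncomputable def xiF (κ cs cp : ℝ) (ℓ n : ℕ) (r : ℝ) : ℝ :=
  (-(ℓ : ℝ)) ^ (ℓ - 1) / (κ ^ 2 * r ^ 2) *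
      sumChi n (fun j => phiHat (κ / cs) j r - phiHat (κ / cp) j r)
    + (-1 : ℝ) ^ (ℓ - 1) / cp ^ 2 * phiHat (κ / cp) n r
    + ((ℓ : ℝ) - 1) / cs ^ 2 * phiHat (κ / cs) n r

noncomputable def etaTil (κ cs cp : ℝ) (ℓ n : ℕ) (r : ℝ) : ℝ :=
  (-(ℓ : ℝ)) ^ (ℓ - 1) / (κ ^ 2 * r ^ 2) *
      sumChi n (fun j => phiTil (κ / cs) j r - 2 * phiF (κ / cs) j r
        + 2 * phiF (κ / cp) j r - phiTil (κ / cp) j r)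
    + (-1 : ℝ) ^ (ℓ - 1) / cp ^ 2 * phiTil (κ / cp) n r
    + ((ℓ : ℝ) - 1) / cs ^ 2 * phiTil (κ / cs) n r

noncomputable def xiTil (κ cs cp : ℝ) (ℓ n : ℕ) (r : ℝ) : ℝ :=
  (-(ℓ : ℝ)) ^ (ℓ - 1) / (κ ^ 2 * r ^ 2) *
      sumChi n (fun j => phiHatTil (κ / cs) j r - 2 * phiHat (κ / cs) j r
        + 2 * phiHat (κ / cp) j r - phiHatTil (κ / cp) j r)
    + (-1 : ℝ) ^ (ℓ - 1) / cp ^ 2 * phiHatTil (κ / cp) n r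
    + ((ℓ : ℝ) - 1) / cs ^ 2 * phiHatTil (κ / cs) n r

/-- Euclidean norm on ℝ² (represented as `Fin 2 → ℝ`). -/
noncomputable def nrm2 (z : Fin 2 → ℝ) : ℝ := Real.sqrt (z 0 ^ 2 + z 1 ^ 2)

/-- Euclidean inner product on ℝ². -/
noncomputable def dot2 (a b : Fin 2 → ℝ) : ℝ := a 0 * b 0 + a 1 * b 1

/-- identity matrix entries -/
noncomputable def idm (i j : Fin 2) : ℝ := if i = j then 1 else 0

/-- J(z) = z zᵀ / |z|² -/
noncomputable def Jmat (z : Fin 2 → ℝ) (i j : Fin 2) : ℝ := z i * z j / nrm2 z ^ 2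

/-- U₁(x,y) = λ ν (x−y)ᵀ + μ (x−y) νᵀ + μ (ν·(x−y)) I -/
noncomputable def U1mat (lam mu : ℝ) (ν x y : Fin 2 → ℝ) (i j : Fin 2) : ℝ :=
  lam * ν i * (x j - y j) + mu * (x i - y i) * ν j + mu * dot2 ν (x - y) * idm i j

/-- U₂(x,y) = (λ+2μ) ν (x−y)ᵀ + μ (x−y) νᵀ + μ (ν·(x−y)) (I − 4J(x−y)) -/
noncomputable def U2mat (lam mu : ℝ) (ν x y : Fin 2 → ℝ) (i j : Fin 2) : ℝ :=
  (lam + 2 * mu) * ν i * (x j - y j) + mu * (x i - y i) * ν j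
    + mu * dot2 ν (x - y) * (idm i j - 4 * Jmat (x - y) i j)


/-- W^{n,1}(x,y) = (U₁(x,y)/|x−y|²)[η̃_{1,n}(|x−y|) I + η̃_{2,n}(|x−y|) J(x−y)]
      + η_{2,n}(|x−y|) U₂(x,y)/|x−y|². -/
noncomputable def Wn1 (lam mu : ℝ) (ν : Fin 2 → ℝ) (κ cs cp : ℝ) (n : ℕ)
    (x y : Fin 2 → ℝ) (i j : Fin 2) : ℝ :=
  (∑ k : Fin 2, U1mat lam mu ν x y i k / nrm2 (x - y) ^ 2 *
      (etaTil κ cs cp 1 n (nrm2 (x - y)) * idm k j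
        + etaTil κ cs cp 2 n (nrm2 (x - y)) * Jmat (x - y) k j))
    + etaF κ cs cp 2 n (nrm2 (x - y)) * U2mat lam mu ν x y i j / nrm2 (x - y) ^ 2

/-! The matrix `W^{n,1}(x, y)` depends only on `z = x - y` and is `O(|z|)` as `z → 0`: the
matrices `U₁`, `U₂` are linear in `z` up to the bounded factor `J(z)`, so everything reduces to
`η_{2,n}(r) = O(r²)` and `η̃_{ℓ,n}(r) = O(r²)`.

The functions `φ_n(γ, ·)` are even. At order `r²` the recursion for `a_{n,1}` eliminates `a_{n,2}`
and leaves `φ_n(γ, r) = -1 - γ² (n+1)(n+2) r² / 8 + O(r⁴)`. Since `φ̃_n = r φ_n'`, the expansion of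
`φ̃_n` has constant term `0` and twice the same second coefficient. Hence
`φ̃_n - 2 φ_n = 2 + O(r⁴)` for both wave numbers, the differences in `η̃_{ℓ,n}` are `O(r⁴)`, and
dividing by `r²` is harmless. In `η_{2,n}` the identity `∑ k, χ_{k,n} (n+k+1)(n+k+2) = 4` makes the
constant left by the division by `r²` cancel against `-1 / c_s² + 1 / c_p²`.
-/

open Asymptotics Topology

section Expansions

/-- The asymptotic expansion `f r = a + b r² + O(r⁴)` as `r → 0`, the start of the Taylor expansion
of an even function. -/
def HasEvenExpansion (f : ℝ → ℝ) (a b : ℝ) : Prop :=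
  (fun r => f r - (a + b * r ^ 2)) =O[𝓝 0] fun r => r ^ 4

/-- The asymptotic expansion `f r = a r + O(r³)` as `r → 0`, the start of the Taylor expansion of an
odd function. -/
def HasOddExpansion (f : ℝ → ℝ) (a : ℝ) : Prop :=
  (fun r => f r - a * r) =O[𝓝 0] fun r => r ^ 3

variable {f g : ℝ → ℝ} {a b c d : ℝ}

lemma HasEvenExpansion.add (hf : HasEvenExpansion f a b) (hg : HasEvenExpansion g c d) :
    HasEvenExpansion (fun r => f r + g r) (a + c) (b + d) :=
  (IsBigO.add hf hg).congr_left fun r => by ring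

lemma HasEvenExpansion.const_mul (k : ℝ) (hf : HasEvenExpansion f a b) :
    HasEvenExpansion (fun r => k * f r) (k * a) (k * b) :=
  (IsBigO.const_mul_left hf k).congr_left fun r => by ring

lemma HasEvenExpansion.sub (hf : HasEvenExpansion f a b) (hg : HasEvenExpansion g c d) :
    HasEvenExpansion (fun r => f r - g r) (a - c) (b - d) :=
  (IsBigO.sub hf hg).congr_left fun r => by ring

lemma HasOddExpansion.const_mul (k : ℝ) (hf : HasOddExpansion f a) :
    HasOddExpansion (fun r => k * f r) (k * a) :=
  (IsBigO.const_mul_left hf k).congr_left fun r => by ring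

lemma HasOddExpansion.sub (hf : HasOddExpansion f a) (hg : HasOddExpansion g b) :
    HasOddExpansion (fun r => f r - g r) (a - b) :=
  (IsBigO.sub hf hg).congr_left fun r => by ring

lemma HasEvenExpansion.isBigO_sub_const (hf : HasEvenExpansion f a b) :
    (fun r => f r - a) =O[𝓝 0] fun r => r ^ 2 := by
  have h₄ : (fun r : ℝ => r ^ 4) =O[𝓝 0] fun r => r ^ 2 := (isLittleO_pow_pow (by norm_num)).isBigO
  have h₂ := (isBigO_refl (fun r : ℝ => r ^ 2) (𝓝 0)).const_mul_left b
  exact ((hf.trans h₄).add h₂).congr_left fun r => by ring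

lemma HasEvenExpansion.isBigO_one (hf : HasEvenExpansion f a b) :
    f =O[𝓝 0] fun _ => (1 : ℝ) := by
  have h : (fun r : ℝ => r ^ 2) =O[𝓝 0] fun _ => (1 : ℝ) :=
    ((continuous_pow 2).tendsto (0 : ℝ)).isBigO_one ℝ
  exact ((hf.isBigO_sub_const.trans h).add (isBigO_const_one ℝ a (𝓝 0))).congr_left fun r => by ring

lemma HasOddExpansion.isBigO_id (hf : HasOddExpansion f a) : f =O[𝓝 0] fun r => r := by
  have h₃ : (fun r : ℝ => r ^ 3) =O[𝓝 0] fun r => r := by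
    simpa using (isLittleO_pow_pow (𝕜 := ℝ) (show 1 < 3 by norm_num)).isBigO
  have h₁ := (isBigO_refl (fun r : ℝ => r) (𝓝 0)).const_mul_left a
  exact ((hf.trans h₃).add h₁).congr_left fun r => by ring

lemma HasEvenExpansion.mul (hf : HasEvenExpansion f a b) (hg : HasEvenExpansion g c d) :
    HasEvenExpansion (fun r => f r * g r) (a * c) (a * d + b * c) := by
  have poly_isBigO_one : (fun r : ℝ => a + b * r ^ 2) =O[𝓝 0] fun _ => (1 : ℝ) :=
    (Continuous.tendsto (by fun_prop) 0).isBigO_one ℝ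
  have h₁ := (IsBigO.mul hf hg.isBigO_one).congr_right fun r => mul_one (r ^ 4)
  have h₂ := (poly_isBigO_one.mul hg).congr_right fun r => one_mul (r ^ 4)
  have h₃ := (isBigO_refl (fun r : ℝ => r ^ 4) (𝓝 0)).const_mul_left (b * d)
  exact ((h₁.add h₂).add h₃).congr_left fun r => by ring

lemma HasOddExpansion.mul (hf : HasOddExpansion f a) (hg : HasOddExpansion g b) :
    HasEvenExpansion (fun r => f r * g r) 0 (a * b) := by
  have h₁ := (IsBigO.mul hf hg.isBigO_id).congr_right fun r => (pow_succ r 3).symm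
  have h₂ := ((isBigO_refl (fun r : ℝ => r) (𝓝 0)).const_mul_left a).mul hg
  exact (h₁.add (h₂.congr_right fun r => (pow_succ' r 3).symm)).congr_left fun r => by ring

lemma hasOddExpansion_id : HasOddExpansion (fun r => r) 1 :=
  (isBigO_zero (fun r : ℝ => r ^ 3) (𝓝 0)).congr_left fun r => by ring

lemma HasEvenExpansion.id_mul (hf : HasEvenExpansion f a b) :
    HasOddExpansion (fun r => r * f r) a := by
  have h := (isBigO_refl (fun r : ℝ => r) (𝓝 0)).mul hf.isBigO_sub_const
  exact h.congr (fun r => by ring) fun r => by ring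

lemma HasEvenExpansion.div_sq (hf : HasEvenExpansion f 0 b) :
    (fun r => f r / r ^ 2 - b) =O[𝓝[≠] 0] fun r => r ^ 2 := by
  have h := (hf.mono nhdsWithin_le_nhds).mul (isBigO_refl (fun r : ℝ => (r ^ 2)⁻¹) (𝓝[≠] 0))
  refine h.congr' ?_ ?_ <;> filter_upwards [self_mem_nhdsWithin] with r (hr : r ≠ 0)
  · field_simp
    ring
  · field_simp

lemma HasEvenExpansion.sumChi {f : ℕ → ℝ → ℝ} {a b : ℕ → ℝ} (n : ℕ)
    (hf : ∀ j, HasEvenExpansion (f j) (a j) (b j)) :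
    HasEvenExpansion (fun r => sumChi n fun j => f j r) (sumChi n a) (sumChi n b) := by
  have h := IsBigO.fun_sum (s := Finset.Icc (-2 : ℤ) 2) fun k _ =>
    IsBigO.const_mul_left (hf ((n : ℤ) + k).toNat) (if 0 ≤ (n : ℤ) + k then chiC n k else 0)
  refine h.congr_left fun r => ?_
  simp only [_root_.sumChi, Finset.sum_mul, ← Finset.sum_add_distrib, ← Finset.sum_sub_distrib]
  refine Finset.sum_congr rfl fun k _ => ?_
  split_ifs <;> ring

end Expansions

section PowerSeries

lemma isBigO_tsum_sub_sum_range {𝕜 : Type*} [NontriviallyNormedField 𝕜] [CompleteSpace 𝕜]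
    {c : ℕ → 𝕜} (hc : c =O[atTop] fun _ => (1 : ℝ)) (N : ℕ) :
    (fun t : 𝕜 => ∑' k, c k * t ^ k - ∑ k ∈ Finset.range N, c k * t ^ k)
      =O[𝓝 0] fun t => t ^ N := by
  obtain ⟨C, hC⟩ := isBigO_one_nat_atTop_iff.1 hc
  let p := FormalMultilinearSeries.ofScalars 𝕜 c
  have radius_pos : 0 < p.radius :=
    one_pos.trans_le <| p.le_radius_of_bound C (r := 1) fun k => by
      simpa [p, FormalMultilinearSeries.ofScalars_norm] using hC k
  have h := (p.hasFPowerSeriesOnBall radius_pos).hasFPowerSeriesAt.isBigO_sub_partialSum_pow N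
  refine IsBigO.of_norm_right (h.congr (fun t => ?_) fun t => (norm_pow t N).symm)
  simp only [p, zero_add, FormalMultilinearSeries.sum, FormalMultilinearSeries.partialSum,
    FormalMultilinearSeries.ofScalars_apply_eq, smul_eq_mul]

variable {c : ℕ → ℝ}

lemma hasEvenExpansion_tsum (hc : c =O[atTop] fun _ => (1 : ℝ)) :
    HasEvenExpansion (fun r => ∑' k, c k * r ^ (2 * k)) (c 0) (c 1) := by
  have tendsto_sq : Tendsto (fun r : ℝ => r ^ 2) (𝓝 0) (𝓝 0) := by
    simpa using (continuous_pow 2).tendsto (0 : ℝ)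
  refine ((isBigO_tsum_sub_sum_range hc 2).comp_tendsto tendsto_sq).congr (fun r => ?_) fun r => ?_
  · simp only [Function.comp_apply, Finset.sum_range_succ, Finset.sum_range_zero, pow_mul]
    ring
  · simp only [Function.comp_apply, ← pow_mul, Nat.reduceMul]

lemma hasOddExpansion_tsum (hc : c =O[atTop] fun _ => (1 : ℝ)) :
    HasOddExpansion (fun r => ∑' k, c k * r ^ (2 * k + 1)) (c 0) := by
  convert (hasEvenExpansion_tsum hc).id_mul using 2 with r
  rw [← tsum_mul_left]
  exact tsum_congr fun k => by ring

lemma isBigO_one_of_forall_notMem_eq_zero {s : Finset ℕ} (hc : ∀ k ∉ s, c k = 0) :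
    c =O[atTop] fun _ => (1 : ℝ) := by
  have hc₀ : c =ᶠ[atTop] fun _ => 0 := by
    rw [← Nat.cofinite_eq_atTop]
    exact s.finite_toSet.eventually_cofinite_notMem.mono hc
  exact hc₀.trans_isBigO (isBigO_zero _ _)

lemma hasEvenExpansion_sum {s : Finset ℕ} (hc : ∀ k ∉ s, c k = 0) :
    HasEvenExpansion (fun r => ∑ k ∈ s, c k * r ^ (2 * k)) (c 0) (c 1) := by
  convert hasEvenExpansion_tsum (isBigO_one_of_forall_notMem_eq_zero hc) using 2 with r
  exact (tsum_eq_sum fun k hk => by rw [hc k hk, zero_mul]).symm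

lemma hasOddExpansion_sum {s : Finset ℕ} (hc : ∀ k ∉ s, c k = 0) :
    HasOddExpansion (fun r => ∑ k ∈ s, c k * r ^ (2 * k + 1)) (c 0) := by
  convert hasOddExpansion_tsum (isBigO_one_of_forall_notMem_eq_zero hc) using 2 with r
  exact (tsum_eq_sum fun k hk => by rw [hc k hk, zero_mul]).symm

end PowerSeries

section Bessel

lemma isBigO_one_pow_div_factorial_mul_factorial (x : ℝ) (j : ℕ) :
    (fun k : ℕ => x ^ k / ((k.factorial : ℝ) * ((k + j).factorial : ℝ)))
      =O[atTop] fun _ => (1 : ℝ) := by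
  refine IsBigO.trans (.of_norm_le fun k => ?_)
    ((FloorSemiring.tendsto_pow_div_factorial_atTop |x|).isBigO_one ℝ)
  have one_le : (1 : ℝ) ≤ ((k + j).factorial : ℝ) := mod_cast (k + j).factorial_pos
  rw [norm_div, norm_pow, norm_mul, RCLike.norm_natCast, RCLike.norm_natCast, Real.norm_eq_abs]
  gcongr
  exact le_mul_of_one_le_right (by positivity) one_le

lemma hasEvenExpansion_besselI0 (γ : ℝ) :
    HasEvenExpansion (fun r => besselI0 (γ * r)) 1 (γ ^ 2 / 4) := by
  convert hasEvenExpansion_tsum (isBigO_one_pow_div_factorial_mul_factorial (γ ^ 2 / 4) 0) using 1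
  · ext r
    refine tsum_congr fun k => ?_
    rw [pow_mul, pow_mul, show (γ * r / 2) ^ 2 = γ ^ 2 / 4 * r ^ 2 by ring, mul_pow]
    ring_nf
  · simp
  · simp

lemma hasOddExpansion_besselI1 (γ : ℝ) :
    HasOddExpansion (fun r => besselI1 (γ * r)) (γ / 2) := by
  convert (hasOddExpansion_tsum
    (isBigO_one_pow_div_factorial_mul_factorial (γ ^ 2 / 4) 1)).const_mul (γ / 2) using 1
  · ext r
    rw [← tsum_mul_left]
    refine tsum_congr fun k => ?_
    rw [pow_succ (γ * r / 2), pow_succ r, pow_mul, pow_mul,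
      show (γ * r / 2) ^ 2 = γ ^ 2 / 4 * r ^ 2 by ring, mul_pow]
    ring
  · simp

end Bessel

section Coefficients

lemma acoef_zero_right (γ : ℝ) (n : ℕ) : acoef γ n 0 = 1 := by
  rw [acoef, if_pos rfl]

lemma acoef_eq_zero_of_lt (γ : ℝ) {n m : ℕ} (h : n < m) : acoef γ n m = 0 := by
  rw [acoef, if_neg (by omega), if_pos h]

lemma acoef_one_one (γ : ℝ) : acoef γ 1 1 = -γ := by
  rw [acoef]
  simp [acoef_zero_right]

lemma acoef_of_lt (γ : ℝ) {n m : ℕ} (hm : m ≠ 0) (h : m < n) :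
    acoef γ n m = 1 / (2 * γ * m) *
      (4 * (((m + 1) / 2 : ℕ) : ℝ) ^ 2 * acoef γ n (m + 1)
        - γ ^ 2 * ∑ k ∈ Finset.Icc (m - 1) (n - 1),
            ((n - k + 1 : ℕ) : ℝ) * acoef γ k (m - 1)) := by
  rw [acoef, if_neg hm, if_neg h.le.not_gt, if_neg h.ne,
    Finset.sum_attach _ fun k => ((n - k + 1 : ℕ) : ℝ) * acoef γ k (m - 1)]

lemma sum_range_sub_add_one (n : ℕ) :
    ∑ k ∈ Finset.range n, ((n - k + 1 : ℕ) : ℝ) = n * (n + 3) / 2 := by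
  induction n with
  | zero => simp
  | succ n ih =>
    rw [Finset.sum_range_succ']
    simp only [Nat.add_sub_add_right, ih]
    push_cast
    ring

lemma acoef_one {γ : ℝ} {n : ℕ} (hn : 2 ≤ n) :
    acoef γ n 1 = 1 / (2 * γ) * (4 * acoef γ n 2 - γ ^ 2 * (n * (n + 3) / 2)) := by
  have Icc_eq_range : Finset.Icc 0 (n - 1) = Finset.range n := by
    ext k
    simp only [Finset.mem_Icc, Finset.mem_range]
    omega
  rw [acoef_of_lt γ one_ne_zero hn, ← sum_range_sub_add_one]
  simp [Icc_eq_range, acoef_zero_right]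

/-- The left-hand side is minus the coefficient of `r²` in `φ_n(γ, r)`. -/
lemma acoef_two_sub_acoef_one {γ : ℝ} (hγ : γ ≠ 0) (n : ℕ) :
    γ ^ 2 / 4 + acoef γ n 2 - γ / 2 * acoef γ n 1 = γ ^ 2 / 8 * ((n + 1) * (n + 2)) := by
  rcases lt_or_ge n 2 with hn | hn
  · rw [acoef_eq_zero_of_lt γ hn]
    interval_cases n
    · rw [acoef_eq_zero_of_lt γ one_pos]
      push_cast
      ring
    · rw [acoef_one_one]
      push_cast
      ring
  · rw [acoef_one hn]
    field_simp
    ring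

lemma sumChi_zero (n : ℕ) : sumChi n (fun _ => 0) = 0 := by
  simp [sumChi]

/-- The coefficients of the omitted terms of `sumChi` vanish. -/
lemma chiC_eq_zero_of_add_neg {n : ℕ} {k : ℤ} (hk : -2 ≤ k) (h : (n : ℤ) + k < 0) :
    chiC n k = 0 := by
  obtain ⟨rfl, rfl | rfl⟩ | ⟨rfl, rfl⟩ :
      n = 0 ∧ (k = -2 ∨ k = -1) ∨ n = 1 ∧ k = -2 := by omega
  all_goals simp [chiC]

lemma sumChi_intCast (n : ℕ) (F : ℤ → ℝ) :
    sumChi n (fun j => F j) = ∑ k ∈ Finset.Icc (-2 : ℤ) 2, chiC n k * F (n + k) := by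
  refine Finset.sum_congr rfl fun k hk => ?_
  split_ifs with h
  · simp only [Int.toNat_of_nonneg h]
  · rw [chiC_eq_zero_of_add_neg (Finset.mem_Icc.1 hk).1 (not_le.1 h), zero_mul]

lemma sumChi_mul_add_one_mul_add_two (n : ℕ) (q : ℝ) :
    sumChi n (fun j => q * ((j + 1) * (j + 2))) = 4 * q := by
  have h := sumChi_intCast n fun m => q * ((m + 1) * (m + 2))
  have Icc_eq : Finset.Icc (-2 : ℤ) 2 = {-2, -1, 0, 1, 2} := by decide
  simp only [Int.cast_natCast] at h
  rw [h, Icc_eq]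
  simp only [Finset.sum_insert, Finset.sum_singleton, Finset.mem_insert, Finset.mem_singleton,
    Int.reduceNeg, Int.reduceEq, or_self, not_false_eq_true, chiC, reduceIte]
  push_cast
  ring

end Coefficients

section Kernels

lemma hasEvenExpansion_vPol (γ : ℝ) (n : ℕ) :
    HasEvenExpansion (vPol γ n) 1 (acoef γ n 2) := by
  rw [← acoef_zero_right γ n]
  refine hasEvenExpansion_sum (c := fun m => acoef γ n (2 * m)) fun m hm => ?_
  rw [Finset.mem_range] at hm
  exact acoef_eq_zero_of_lt γ (by omega)

lemma hasOddExpansion_wPol (γ : ℝ) (n : ℕ) : HasOddExpansion (wPol γ n) (acoef γ n 1) := by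
  refine hasOddExpansion_sum (c := fun m => acoef γ n (2 * m + 1)) fun m hm => ?_
  rw [Finset.mem_range] at hm
  exact acoef_eq_zero_of_lt γ (by omega)

lemma vTil_eq (γ : ℝ) (n : ℕ) (r : ℝ) :
    vTil γ n r = 2 * ∑ m ∈ Finset.Icc 1 (n / 2), m * acoef γ n (2 * m) * r ^ (2 * m)
      - γ * (r * wPol γ n r) := by
  rw [vTil, wPol, Finset.mul_sum _ _ r]
  congr 2
  exact Finset.sum_congr rfl fun m _ => by ring

lemma wTil_eq (γ : ℝ) (n : ℕ) (r : ℝ) :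
    wTil γ n r = 2 * ∑ m ∈ Finset.Icc 1 ((n - 1) / 2), m * acoef γ n (2 * m + 1) * r ^ (2 * m + 1)
      - γ * (r * vPol γ n r) := by
  rw [wTil, vPol, Finset.mul_sum _ _ r]
  congr 2
  exact Finset.sum_congr rfl fun m _ => by ring

lemma hasEvenExpansion_vTil (γ : ℝ) (n : ℕ) :
    HasEvenExpansion (vTil γ n) 0 (2 * acoef γ n 2 - γ * acoef γ n 1) := by
  have hsum := hasEvenExpansion_sum (s := Finset.Icc 1 (n / 2))
    (c := fun m => m * acoef γ n (2 * m)) fun m hm => by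
      rcases Nat.eq_zero_or_pos m with rfl | hm₀
      · simp
      · rw [acoef_eq_zero_of_lt γ (by simp only [Finset.mem_Icc] at hm; omega), mul_zero]
  convert (hsum.const_mul 2).sub
    ((hasOddExpansion_id.mul (hasOddExpansion_wPol γ n)).const_mul γ) using 1
  · exact funext (vTil_eq γ n)
  · simp
  · simp

lemma hasOddExpansion_wTil (γ : ℝ) (n : ℕ) : HasOddExpansion (wTil γ n) (-γ) := by
  have hsum := hasOddExpansion_sum (s := Finset.Icc 1 ((n - 1) / 2))
    (c := fun m => m * acoef γ n (2 * m + 1)) fun m hm => by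
      rcases Nat.eq_zero_or_pos m with rfl | hm₀
      · simp
      · rw [acoef_eq_zero_of_lt γ (by simp only [Finset.mem_Icc] at hm; omega), mul_zero]
  convert (hsum.const_mul 2).sub ((hasEvenExpansion_vPol γ n).id_mul.const_mul γ) using 1
  · exact funext (wTil_eq γ n)
  · simp

/-- The coefficient of `r²` in `φ_n(γ, r)`. -/
noncomputable def phiCoeff (γ : ℝ) (n : ℕ) : ℝ := -(γ ^ 2 / 8) * ((n + 1) * (n + 2))

lemma hasEvenExpansion_phiF {γ : ℝ} (hγ : γ ≠ 0) (n : ℕ) :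
    HasEvenExpansion (phiF γ n) (-1) (phiCoeff γ n) := by
  convert (((hasEvenExpansion_besselI0 γ).mul (hasEvenExpansion_vPol γ n)).const_mul (-1)).add
    ((hasOddExpansion_besselI1 γ).mul (hasOddExpansion_wPol γ n)) using 1
  · ext r
    rw [phiF]
    ring
  · norm_num
  · rw [phiCoeff]
    linear_combination acoef_two_sub_acoef_one hγ n

lemma hasEvenExpansion_phiTil {γ : ℝ} (hγ : γ ≠ 0) (n : ℕ) :
    HasEvenExpansion (phiTil γ n) 0 (2 * phiCoeff γ n) := by
  convert (((hasEvenExpansion_besselI0 γ).mul (hasEvenExpansion_vTil γ n)).const_mul (-1)).add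
    ((hasOddExpansion_besselI1 γ).mul (hasOddExpansion_wTil γ n)) using 1
  · ext r
    rw [phiTil]
    ring
  · norm_num
  · rw [phiCoeff]
    linear_combination 2 * acoef_two_sub_acoef_one hγ n

variable {κ cs cp : ℝ}

lemma isBigO_etaTil (hκ : κ ≠ 0) (hcs : cs ≠ 0) (hcp : cp ≠ 0) (ℓ n : ℕ) :
    etaTil κ cs cp ℓ n =O[𝓝[≠] 0] fun r => r ^ 2 := by
  have hs : κ / cs ≠ 0 := div_ne_zero hκ hcs
  have hp : κ / cp ≠ 0 := div_ne_zero hκ hcp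
  have hsum : HasEvenExpansion (fun r => sumChi n fun j => phiTil (κ / cs) j r
      - 2 * phiF (κ / cs) j r + 2 * phiF (κ / cp) j r - phiTil (κ / cp) j r) 0 0 := by
    convert HasEvenExpansion.sumChi n fun j =>
      (((hasEvenExpansion_phiTil hs j).sub ((hasEvenExpansion_phiF hs j).const_mul 2)).add
        ((hasEvenExpansion_phiF hp j).const_mul 2)).sub (hasEvenExpansion_phiTil hp j) using 1 <;>
    · ring_nf
      exact (sumChi_zero n).symm
  have hphi : ∀ {γ : ℝ}, γ ≠ 0 → phiTil γ n =O[𝓝[≠] 0] fun r => r ^ 2 := fun hγ =>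
    ((hasEvenExpansion_phiTil hγ n).isBigO_sub_const.mono nhdsWithin_le_nhds).congr_left
      fun r => sub_zero _
  refine (((hsum.div_sq.const_mul_left ((-(ℓ : ℝ)) ^ (ℓ - 1) / κ ^ 2)).add
    ((hphi hp).const_mul_left ((-1) ^ (ℓ - 1) / cp ^ 2))).add
    ((hphi hs).const_mul_left (((ℓ : ℝ) - 1) / cs ^ 2))).congr_left fun r => ?_
  rw [etaTil]
  ring

lemma isBigO_etaF_two (hκ : κ ≠ 0) (hcs : cs ≠ 0) (hcp : cp ≠ 0) (n : ℕ) :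
    etaF κ cs cp 2 n =O[𝓝[≠] 0] fun r => r ^ 2 := by
  have hs : κ / cs ≠ 0 := div_ne_zero hκ hcs
  have hp : κ / cp ≠ 0 := div_ne_zero hκ hcp
  have hsum : HasEvenExpansion (fun r => sumChi n fun j => phiF (κ / cs) j r - phiF (κ / cp) j r)
      0 (((κ / cp) ^ 2 - (κ / cs) ^ 2) / 2) := by
    convert HasEvenExpansion.sumChi n fun j =>
      (hasEvenExpansion_phiF hs j).sub (hasEvenExpansion_phiF hp j) using 1
    · simp only [sub_self, sumChi_zero]
    · simp only [phiCoeff, ← sub_mul, sumChi_mul_add_one_mul_add_two]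
      ring
  have hphi : ∀ {γ : ℝ}, γ ≠ 0 → (fun r => phiF γ n r - -1) =O[𝓝[≠] 0] fun r => r ^ 2 := fun hγ =>
    (hasEvenExpansion_phiF hγ n).isBigO_sub_const.mono nhdsWithin_le_nhds
  refine (((hsum.div_sq.const_mul_left (-2 / κ ^ 2)).add
    ((hphi hp).const_mul_left (-1 / cp ^ 2))).add
    ((hphi hs).const_mul_left (1 / cs ^ 2))).congr_left fun r => ?_
  have constants_cancel :
      -2 / κ ^ 2 * (((κ / cp) ^ 2 - (κ / cs) ^ 2) / 2) + 1 / cp ^ 2 - 1 / cs ^ 2 = 0 := by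
    field_simp
    ring
  rw [etaF]
  push_cast
  linear_combination -constants_cancel

end Kernels

section Geometry

lemma nrm2_eq_norm (z : Fin 2 → ℝ) : nrm2 z = ‖WithLp.toLp 2 z‖ := by
  simp [nrm2, EuclideanSpace.norm_eq]

lemma nrm2_nonneg (z : Fin 2 → ℝ) : 0 ≤ nrm2 z :=
  Real.sqrt_nonneg _

lemma nrm2_eq_zero {z : Fin 2 → ℝ} : nrm2 z = 0 ↔ z = 0 := by
  simp [nrm2_eq_norm]

lemma tendsto_nrm2_nhdsNE_zero : Tendsto nrm2 (𝓝[≠] 0) (𝓝[≠] 0) := by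
  have hcont : Continuous nrm2 := by
    unfold nrm2
    fun_prop
  refine tendsto_nhdsWithin_iff.2 ⟨?_, ?_⟩
  · simpa [nrm2_eq_zero.2 rfl] using (hcont.tendsto 0).mono_left nhdsWithin_le_nhds
  · filter_upwards [self_mem_nhdsWithin] with z hz
    exact nrm2_eq_zero.not.2 hz

lemma abs_apply_le_nrm2 (z : Fin 2 → ℝ) (i : Fin 2) : |z i| ≤ nrm2 z := by
  rw [nrm2_eq_norm]
  exact PiLp.norm_apply_le (WithLp.toLp 2 z) i

lemma abs_dot2_le (a b : Fin 2 → ℝ) : |dot2 a b| ≤ nrm2 a * nrm2 b := by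
  rw [nrm2_eq_norm, nrm2_eq_norm]
  convert abs_real_inner_le_norm (WithLp.toLp 2 a) (WithLp.toLp 2 b) using 2
  simp [dot2, PiLp.inner_apply, mul_comm]

lemma abs_idm_le_one (i j : Fin 2) : |idm i j| ≤ 1 := by
  unfold idm
  split_ifs <;> simp

lemma abs_Jmat_le_one (z : Fin 2 → ℝ) (i j : Fin 2) : |Jmat z i j| ≤ 1 := by
  rw [Jmat, abs_div, abs_mul, abs_of_nonneg (sq_nonneg (nrm2 z)), pow_two]
  exact div_le_one_of_le₀ (mul_le_mul (abs_apply_le_nrm2 z i) (abs_apply_le_nrm2 z j)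
    (abs_nonneg _) (nrm2_nonneg z)) (mul_self_nonneg _)

lemma abs_sub_four_mul_Jmat_le (z : Fin 2 → ℝ) (i j : Fin 2) : |idm i j - 4 * Jmat z i j| ≤ 5 := by
  have hI := abs_le.1 (abs_idm_le_one i j)
  have hJ := abs_le.1 (abs_Jmat_le_one z i j)
  exact abs_le.2 ⟨by linarith, by linarith⟩

/-- The common shape of the entries of `U₁` and `U₂`. -/
lemma abs_tensor_add_tensor_add_dot2_le (α β m : ℝ) (ν z : Fin 2 → ℝ) (i j : Fin 2) :
    |α * ν i * z j + β * z i * ν j + β * dot2 ν z * m|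
      ≤ (|α| + |β| + |β| * |m|) * (nrm2 ν * nrm2 z) := by
  have hν := nrm2_nonneg ν
  calc |α * ν i * z j + β * z i * ν j + β * dot2 ν z * m|
      ≤ |α * ν i * z j| + |β * z i * ν j| + |β * dot2 ν z * m| := abs_add_three _ _ _
    _ = |α| * (|ν i| * |z j|) + |β| * (|ν j| * |z i|) + |β| * |m| * |dot2 ν z| := by
      simp only [abs_mul]
      ring
    _ ≤ |α| * (nrm2 ν * nrm2 z) + |β| * (nrm2 ν * nrm2 z) + |β| * |m| * (nrm2 ν * nrm2 z) := by
      gcongr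
      all_goals first | exact abs_apply_le_nrm2 _ _ | exact abs_dot2_le _ _
    _ = (|α| + |β| + |β| * |m|) * (nrm2 ν * nrm2 z) := by ring

end Geometry

section DiagonalLimit

variable {ι : Type*} (l : Filter ι) (x y : ι → Fin 2 → ℝ) (lam mu : ℝ) (ν : Fin 2 → ℝ)

lemma isBigO_U1mat (i j : Fin 2) :
    (fun t => U1mat lam mu ν (x t) (y t) i j) =O[l] fun t => nrm2 (x t - y t) := by
  refine .of_bound ((|lam| + |mu| + |mu| * 1) * nrm2 ν) (.of_forall fun t => ?_)
  rw [Real.norm_eq_abs, Real.norm_of_nonneg (nrm2_nonneg _), mul_assoc]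
  refine (abs_tensor_add_tensor_add_dot2_le lam mu (idm i j) ν (x t - y t) i j).trans ?_
  have := nrm2_nonneg ν
  have := nrm2_nonneg (x t - y t)
  gcongr
  exact abs_idm_le_one i j

lemma isBigO_U2mat (i j : Fin 2) :
    (fun t => U2mat lam mu ν (x t) (y t) i j) =O[l] fun t => nrm2 (x t - y t) := by
  refine .of_bound ((|lam + 2 * mu| + |mu| + |mu| * 5) * nrm2 ν) (.of_forall fun t => ?_)
  rw [Real.norm_eq_abs, Real.norm_of_nonneg (nrm2_nonneg _), mul_assoc]
  refine (abs_tensor_add_tensor_add_dot2_le (lam + 2 * mu) mu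
    (idm i j - 4 * Jmat (x t - y t) i j) ν (x t - y t) i j).trans ?_
  have := nrm2_nonneg ν
  have := nrm2_nonneg (x t - y t)
  gcongr
  exact abs_sub_four_mul_Jmat_le _ i j

lemma isBigO_div_sq_mul {𝕜 : Type*} [NormedField 𝕜] {u e ρ : ι → 𝕜}
    (hu : u =O[l] ρ) (he : e =O[l] fun t => ρ t ^ 2) :
    (fun t => u t / ρ t ^ 2 * e t) =O[l] ρ := by
  refine ((hu.mul (isBigO_refl (fun t => (ρ t ^ 2)⁻¹) l)).mul he).congr
    (fun t => by rw [div_eq_mul_inv]) fun t => ?_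
  rcases eq_or_ne (ρ t) 0 with h | h
  · simp [h]
  · field_simp

variable {l x y} {κ cs cp : ℝ}

theorem isBigO_Wn1 (hκ : κ ≠ 0) (hcs : cs ≠ 0) (hcp : cp ≠ 0) (n : ℕ)
    (hxy : Tendsto (fun t => x t - y t) l (𝓝[≠] 0)) (i j : Fin 2) :
    (fun t => Wn1 lam mu ν κ cs cp n (x t) (y t) i j) =O[l] fun t => nrm2 (x t - y t) := by
  have hρ := tendsto_nrm2_nhdsNE_zero.comp hxy
  have heta := (isBigO_etaF_two hκ hcs hcp n).comp_tendsto hρ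
  have hetaTil := fun ℓ => (isBigO_etaTil hκ hcs hcp ℓ n).comp_tendsto hρ
  have hI := fun k => isBigO_const_one ℝ (idm k j) l
  have hJ : ∀ k, (fun t => Jmat (x t - y t) k j) =O[l] fun _ => (1 : ℝ) := fun k =>
    .of_bound 1 (.of_forall fun t => by simpa using abs_Jmat_le_one (x t - y t) k j)
  refine .add
    (.fun_sum fun k _ => isBigO_div_sq_mul l (isBigO_U1mat l x y lam mu ν i k) (.add ?_ ?_))
    ((isBigO_div_sq_mul l (isBigO_U2mat l x y lam mu ν i j) heta).congr_left fun t => ?_)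
  · exact ((hetaTil 1).mul (hI k)).congr_right fun t => mul_one _
  · exact ((hetaTil 2).mul (hJ k)).congr_right fun t => mul_one _
  · rw [Function.comp_apply, Function.comp_apply]
    ring

theorem tendsto_Wn1_zero (hκ : κ ≠ 0) (hcs : cs ≠ 0) (hcp : cp ≠ 0) (n : ℕ)
    (hxy : Tendsto (fun t => x t - y t) l (𝓝[≠] 0)) :
    Tendsto (fun t i j => Wn1 lam mu ν κ cs cp n (x t) (y t) i j) l (𝓝 fun _ _ => 0) :=
  tendsto_pi_nhds.2 fun i => tendsto_pi_nhds.2 fun j =>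
    (isBigO_Wn1 lam mu ν hκ hcs hcp n hxy i j).trans_tendsto
      ((tendsto_nrm2_nhdsNE_zero.comp hxy).mono_right nhdsWithin_le_nhds)

theorem Wn1_diagonal_limit_general (hκ : κ ≠ 0) (hcs : cs ≠ 0) (hcp : cp ≠ 0)
    (n : ℕ) {x : ℝ → Fin 2 → ℝ} {s : ℝ} (hx' : deriv x s ≠ 0) :
    (∃ δ > (0 : ℝ), ∀ σ : ℝ, σ ≠ s → |σ - s| < δ → x σ ≠ x s) ∧
    Tendsto (fun σ i j => Wn1 lam mu ν κ cs cp n (x s) (x σ) i j) (𝓝[≠] s) (𝓝 fun _ _ => 0) := by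
  have hx : HasDerivAt x (deriv x s) s := (differentiableAt_of_deriv_ne_zero hx').hasDerivAt
  have hne : ∀ᶠ σ in 𝓝[≠] s, x σ ≠ x s := hx.eventually_ne hx'
  refine ⟨?_, tendsto_Wn1_zero lam mu ν hκ hcs hcp n (tendsto_nhdsWithin_iff.2 ⟨?_, ?_⟩)⟩
  · obtain ⟨δ, hδ, h⟩ := Metric.eventually_nhds_iff.1 (eventually_nhdsWithin_iff.1 hne)
    exact ⟨δ, hδ, fun σ hσ hdist => h hdist hσ⟩
  · simpa using (hx.continuousAt.tendsto.const_sub (x s)).mono_left nhdsWithin_le_nhds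
  · exact hne.mono fun σ hσ => sub_ne_zero.2 hσ.symm

end DiagonalLimit

/-- Along a smooth curve, W^{n,1}(x(s), x(σ)) tends to the zero matrix as σ → s. -/
theorem Wn1_diagonal_limit (lam mu : ℝ) (ν : Fin 2 → ℝ) (κ cs cp : ℝ)
    (hκ : 0 < κ) (hcs : 0 < cs) (hcp : 0 < cp) (n : ℕ)
    (x : ℝ → (Fin 2 → ℝ)) (hx : ContDiff ℝ 2 x) (s : ℝ) (hx' : deriv x s ≠ 0) :
    (∃ δ > (0 : ℝ), ∀ σ : ℝ, σ ≠ s → |σ - s| < δ → x σ ≠ x s) ∧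
    Tendsto (fun σ : ℝ => fun i j : Fin 2 => Wn1 lam mu ν κ cs cp n (x s) (x σ) i j)
      (nhdsWithin s {s}ᶜ)
      (nhds (fun _ _ : Fin 2 => (0 : ℝ))) :=
  Wn1_diagonal_limit_general lam mu ν hκ.ne' hcs.ne' hcp.ne' n hx'
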